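/- For the function E_k defined for k ≥ 1 by E_k(z) = (e^{−iz}/Γ(k)²) · Σ_{m=0}^∞ (Γ(k+m)/(m!)²)·(2ψ(m+1) − ψ(m+k) − ln(iz))·(iz)^m (with E_0(z) = e^{−iz}), the recursion ∂_z(z·∂_z E_{k+1}(z)) = i·E_k(z) holds, and there is a constant c depending only on k such that |E_k(z)| ≤ c·(1 + ln₊(1/|z|)) for all real z ≠ 0. -/

import Mathlib

/-- The positive part of the logarithm: `ln₊ x = max (ln x) 0`. -/
noncomputable def lnp (x : ℝ) : ℝ := max (Real.log x) 0

/-- The digamma function at positive integer arguments: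
`ψ(n) = −γ + Σ_{j=1}^{n−1} 1/j = −γ + H_{n−1}`. -/
noncomputable def digammaNat (n : ℕ) : ℝ :=
  -Real.eulerMascheroniConstant + (harmonic (n - 1) : ℝ)

/-- The exponential-integral functions
`E_0(z) = e^{−iz}` and, for `k ≥ 1`,
`E_k(z) = (e^{−iz}/Γ(k)²) Σ_{m=0}^∞ (Γ(k+m)/(m!)²)(2ψ(m+1) − ψ(m+k) − ln(iz))(iz)^m`. -/
noncomputable def Efun : ℕ → ℝ → ℂ
  | 0, z => Complex.exp (-Complex.I * (z : ℂ))
  | (k + 1), z =>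
      Complex.exp (-Complex.I * (z : ℂ)) / (Complex.Gamma ((k : ℂ) + 1)) ^ 2 *
        ∑' m : ℕ, (Complex.Gamma ((k : ℂ) + 1 + (m : ℂ)) / ((m.factorial : ℂ)) ^ 2) *
          (((2 * digammaNat (m + 1) - digammaNat (m + k + 1) : ℝ) : ℂ)
              - Complex.log (Complex.I * (z : ℂ))) *
          (Complex.I * (z : ℂ)) ^ m

/-!
`E_{n+1}(z) = e^{-iz} U(n+1, 1, iz)` with Tricomi's confluent hypergeometric function `U`. Comparing
coefficients of the logarithmic series yields a three-term recurrence for `U(n+1, 1, w)` in `n` and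
a formula for its derivative; together they turn into `z E_{k+1}' = k E_{k+1} - E_k`, from which the
differential recursion follows. The series shows that `E_{k+1}` has at most a logarithmic
singularity at `0`, but cancels too heavily to give a bound for large `z`. There one uses
`n! U(n+1, 1, w) = ∫₀^∞ e^{-u} uⁿ / (u + w)ⁿ⁺¹ du`: the two sides satisfy the same recurrence, and
for `n = 0` they solve the same first-order equation `f' = f - 1/w` on the slit plane and both
behave like `-γ - log w` at `0`.
-/

open Complex Filter MeasureTheory Set Topology

/-- `IsEntireCoeff a` says that `∑ aₘ wᵐ` has infinite radius of convergence, expressed as absolute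
convergence at every real point. -/
def IsEntireCoeff (a : ℕ → ℂ) : Prop :=
  ∀ r : ℝ, Summable fun m ↦ ‖a m‖ * r ^ m

namespace IsEntireCoeff

variable {a b : ℕ → ℂ}

lemma of_norm_le_geometric_mul (ha : IsEntireCoeff a) (C R : ℝ)
    (hb : ∀ m, ‖b m‖ ≤ C * R ^ m * ‖a m‖) : IsEntireCoeff b := by
  intro r
  refine Summable.of_norm_bounded ((ha (R * |r|)).mul_left C) fun m ↦ ?_
  rw [norm_mul, norm_norm, norm_pow, Real.norm_eq_abs]
  calc ‖b m‖ * |r| ^ m ≤ C * R ^ m * ‖a m‖ * |r| ^ m := by gcongr; exact hb m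
    _ = C * (‖a m‖ * (R * |r|) ^ m) := by rw [mul_pow]; ring

lemma natCast_mul (ha : IsEntireCoeff a) : IsEntireCoeff fun m ↦ m * a m := by
  refine ha.of_norm_le_geometric_mul 1 2 fun m ↦ ?_
  have hm : (m : ℝ) ≤ 2 ^ m := mod_cast (Nat.lt_two_pow_self (n := m)).le
  rw [norm_mul, norm_natCast, one_mul]
  gcongr

lemma summable (ha : IsEntireCoeff a) (w : ℂ) : Summable fun m ↦ a m * w ^ m :=
  .of_norm <| by simpa only [norm_mul, norm_pow] using ha ‖w‖

lemma hasDerivAt_tsum (ha : IsEntireCoeff a) (w : ℂ) :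
    HasDerivAt (fun v ↦ ∑' m, a m * v ^ m) (∑' m : ℕ, a m * (m * w ^ (m - 1))) w := by
  have hw : w ∈ Metric.ball 0 (‖w‖ + 1) := by simp
  refine hasDerivAt_tsum_of_isPreconnected (ha.natCast_mul (‖w‖ + 1)) Metric.isOpen_ball
    (convex_ball _ _).isPreconnected (fun m v _ ↦ (hasDerivAt_pow m v).const_mul (a m))
    (fun m v hv ↦ ?_) hw (ha.summable w) hw
  have hv' : ‖v‖ ≤ ‖w‖ + 1 := (mem_ball_zero_iff.1 hv).le
  calc ‖a m * (m * v ^ (m - 1))‖ = ‖(m : ℂ) * a m‖ * ‖v‖ ^ (m - 1) := by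
        rw [norm_mul, norm_mul, norm_mul, norm_pow]; ring
    _ ≤ ‖(m : ℂ) * a m‖ * (‖w‖ + 1) ^ (m - 1) := by gcongr
    _ ≤ ‖(m : ℂ) * a m‖ * (‖w‖ + 1) ^ m := by
        gcongr
        · linarith [norm_nonneg w]
        · exact Nat.sub_le m 1

lemma hasDerivAt_tsum_of_ne_zero (ha : IsEntireCoeff a) {w : ℂ} (hw : w ≠ 0) :
    HasDerivAt (fun v ↦ ∑' m, a m * v ^ m) ((∑' m : ℕ, m * a m * w ^ m) / w) w := by
  refine (ha.hasDerivAt_tsum w).congr_deriv ?_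
  rw [eq_div_iff hw, ← tsum_mul_right]
  refine tsum_congr fun m ↦ ?_
  rcases m with _ | m
  · simp
  · rw [Nat.add_sub_cancel, pow_succ]; ring

lemma continuous_tsum (ha : IsEntireCoeff a) : Continuous fun w ↦ ∑' m, a m * w ^ m :=
  continuous_iff_continuousAt.2 fun w ↦ (ha.hasDerivAt_tsum w).continuousAt

lemma exists_norm_tsum_le (ha : IsEntireCoeff a) :
    ∃ B : ℝ, 0 ≤ B ∧ ∀ w : ℂ, ‖w‖ ≤ 1 → ‖∑' m, a m * w ^ m‖ ≤ B := by
  obtain ⟨B, hB⟩ := (isCompact_closedBall (0 : ℂ) 1).exists_bound_of_continuousOn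
    ha.continuous_tsum.continuousOn
  exact ⟨B, (norm_nonneg _).trans (hB 0 (by simp)), fun w hw ↦ hB w (by simpa using hw)⟩

end IsEntireCoeff

/-- The coefficient sequence of `w * ∑ aₘ wᵐ`. -/
def shiftCoeff (a : ℕ → ℂ) : ℕ → ℂ
  | 0 => 0
  | m + 1 => a m

lemma hasSum_shiftCoeff {a : ℕ → ℂ} {w S : ℂ} (h : HasSum (fun m ↦ a m * w ^ m) S) :
    HasSum (fun m ↦ shiftCoeff a m * w ^ m) (w * S) := by
  rw [← hasSum_nat_add_iff' 1]
  simpa [shiftCoeff, pow_succ, mul_left_comm, mul_comm] using h.mul_left w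

lemma digammaNat_succ_succ (n : ℕ) : digammaNat (n + 2) = digammaNat (n + 1) + 1 / (n + 1) := by
  simp only [digammaNat, Nat.add_sub_cancel, show n + 2 - 1 = n + 1 from rfl, harmonic_succ]
  push_cast
  ring

lemma abs_digammaNat_succ_le (n : ℕ) : |digammaNat (n + 1)| ≤ n + 1 := by
  induction n with
  | zero =>
    rw [show digammaNat (0 + 1) = -Real.eulerMascheroniConstant by simp [digammaNat], abs_neg,
      abs_le]
    constructor <;> push_cast <;> linarith [Real.one_half_lt_eulerMascheroniConstant,
      Real.eulerMascheroniConstant_lt_two_thirds]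
  | succ n ih =>
    have hinv : |1 / ((n : ℝ) + 1)| ≤ 1 := by
      rw [abs_of_pos (by positivity)]
      exact (div_le_one (by positivity)).2 (by linarith [n.cast_nonneg (α := ℝ)])
    rw [digammaNat_succ_succ, Nat.cast_succ]
    exact (abs_add_le _ _).trans (add_le_add ih hinv)

/-- The coefficients `(n+1)ₘ / (n! (m!)²)` multiplying `-log w` in `tricomiU`. -/
noncomputable def kummerCoeff (n m : ℕ) : ℂ :=
  (n + m).factorial / (n.factorial * m.factorial : ℂ) ^ 2

/-- The logarithmic coefficients `(n+1)ₘ / (n! (m!)²) * (2ψ(m+1) - ψ(n+m+1) - L)`. Keeping the value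
`L` of the logarithm as a parameter, every identity between the series is one between these
coefficients. -/
noncomputable def logCoeff (L : ℂ) (n m : ℕ) : ℂ :=
  kummerCoeff n m * ((2 * digammaNat (m + 1) - digammaNat (m + n + 1) : ℝ) - L)

lemma kummerCoeff_zero (m : ℕ) : kummerCoeff 0 m = (m.factorial : ℂ)⁻¹ := by
  have hm : (m.factorial : ℂ) ≠ 0 := mod_cast m.factorial_ne_zero
  simp only [kummerCoeff, zero_add, Nat.factorial_zero, Nat.cast_one, one_mul]
  field_simp

lemma kummerCoeff_succ_left (n m : ℕ) :
    kummerCoeff (n + 1) m = kummerCoeff n m * ((n + m + 1) / ((n : ℂ) + 1) ^ 2) := by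
  have hn : (n : ℂ) + 1 ≠ 0 := mod_cast n.succ_ne_zero
  rw [kummerCoeff, kummerCoeff, Nat.add_right_comm, Nat.factorial_succ, Nat.factorial_succ]
  push_cast
  field_simp

lemma kummerCoeff_succ_right (n m : ℕ) :
    kummerCoeff n (m + 1) = kummerCoeff n m * ((n + m + 1) / ((m : ℂ) + 1) ^ 2) := by
  have hm : (m : ℂ) + 1 ≠ 0 := mod_cast m.succ_ne_zero
  rw [kummerCoeff, kummerCoeff, ← Nat.add_assoc, Nat.factorial_succ, Nat.factorial_succ]
  push_cast
  field_simp

lemma norm_kummerCoeff_le (n m : ℕ) :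
    ‖kummerCoeff n m‖ ≤ 2 ^ n * 2 ^ m * ‖kummerCoeff 0 m‖ := by
  have hchoose : kummerCoeff n m = (n + m).choose n / n.factorial * (m.factorial : ℂ)⁻¹ := by
    have hn : (n.factorial : ℂ) ≠ 0 := mod_cast n.factorial_ne_zero
    have hm : (m.factorial : ℂ) ≠ 0 := mod_cast m.factorial_ne_zero
    rw [kummerCoeff, Nat.cast_add_choose]
    field_simp
  have hpow : ((n + m).choose n : ℝ) ≤ 2 ^ n * 2 ^ m := by
    rw [← pow_add]; exact_mod_cast Nat.choose_le_two_pow (n + m) n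
  have hfac : (1 : ℝ) ≤ n.factorial := mod_cast n.factorial_pos
  rw [hchoose, kummerCoeff_zero, norm_mul, norm_div, norm_natCast, norm_natCast]
  gcongr
  exact (div_le_self (by positivity) hfac).trans hpow

lemma isEntireCoeff_kummerCoeff (n : ℕ) : IsEntireCoeff (kummerCoeff n) := by
  have hzero : IsEntireCoeff (kummerCoeff 0) := fun r ↦ by
    simpa [kummerCoeff_zero, div_eq_inv_mul] using Real.summable_pow_div_factorial r
  exact hzero.of_norm_le_geometric_mul (2 ^ n) 2 (norm_kummerCoeff_le n)

lemma isEntireCoeff_logCoeff (L : ℂ) (n : ℕ) : IsEntireCoeff (logCoeff L n) := by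
  refine (isEntireCoeff_kummerCoeff n).of_norm_le_geometric_mul (n + 3 + ‖L‖) 2 fun m ↦ ?_
  have hψ : |2 * digammaNat (m + 1) - digammaNat (m + n + 1)| ≤ 2 * (m + 1) + (m + n + 1) := by
    refine (abs_sub _ _).trans ?_
    rw [abs_mul, abs_two]
    gcongr
    · exact abs_digammaNat_succ_le m
    · exact_mod_cast abs_digammaNat_succ_le (m + n)
  have hm : (m : ℝ) + 1 ≤ 2 ^ m := mod_cast Nat.lt_two_pow_self (n := m)
  rw [logCoeff, norm_mul, mul_comm]
  gcongr
  calc ‖((2 * digammaNat (m + 1) - digammaNat (m + n + 1) : ℝ) : ℂ) - L‖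
      ≤ 2 * (m + 1) + (m + n + 1) + ‖L‖ := by
        refine (norm_sub_le _ _).trans ?_
        rw [norm_real, Real.norm_eq_abs]
        gcongr
    _ ≤ (n + 3 + ‖L‖) * (m + 1) := by
        nlinarith [mul_nonneg n.cast_nonneg m.cast_nonneg (α := ℝ),
          mul_nonneg (norm_nonneg L) (m.cast_nonneg (α := ℝ))]
    _ ≤ (n + 3 + ‖L‖) * 2 ^ m := by gcongr

section logCoeff

variable (L : ℂ) (n m : ℕ)

lemma logCoeff_eq_sub : logCoeff L n m = logCoeff 0 n m - L * kummerCoeff n m := by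
  simp only [logCoeff]
  ring

lemma logCoeff_succ_left :
    ((n : ℂ) + 1) ^ 2 * logCoeff L (n + 1) m
      = (n + m + 1) * logCoeff L n m - kummerCoeff n m := by
  have hn : (n : ℂ) + 1 ≠ 0 := mod_cast n.succ_ne_zero
  have hnm : (m : ℂ) + n + 1 ≠ 0 := mod_cast (m + n).succ_ne_zero
  rw [logCoeff, logCoeff, kummerCoeff_succ_left, ← add_assoc, digammaNat_succ_succ]
  push_cast
  field_simp
  ring

lemma sq_mul_logCoeff_sub :
    (m : ℂ) ^ 2 * logCoeff L n m - 2 * m * kummerCoeff n m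
      = ((n : ℂ) + 1) ^ 2 * shiftCoeff (logCoeff L (n + 1)) m := by
  rcases m with _ | m
  · simp [shiftCoeff]
  · have hm : (m : ℂ) + 1 ≠ 0 := mod_cast m.succ_ne_zero
    have hnm : (m : ℂ) + n + 1 ≠ 0 := mod_cast (m + n).succ_ne_zero
    rw [shiftCoeff, logCoeff_succ_left, logCoeff, logCoeff, kummerCoeff_succ_right,
      Nat.add_right_comm m 1 n, digammaNat_succ_succ, digammaNat_succ_succ]
    push_cast
    field_simp
    ring

lemma logCoeff_zero_zero : logCoeff L 0 0 = -Real.eulerMascheroniConstant - L := by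
  simp [logCoeff, kummerCoeff, digammaNat, two_mul]

lemma logCoeff_one :
    logCoeff L 1 m = logCoeff L 0 m + shiftCoeff (logCoeff L 0) m - if m = 0 then 1 else 0 := by
  have hleft := logCoeff_succ_left L 0 m
  rcases m with _ | m
  · simpa [shiftCoeff, kummerCoeff_zero] using hleft
  · have hm : (m : ℂ) + 1 ≠ 0 := mod_cast m.succ_ne_zero
    have hright := sq_mul_logCoeff_sub L 0 (m + 1)
    have hleft' := logCoeff_succ_left L 0 m
    have hq : ((m : ℂ) + 1) * kummerCoeff 0 (m + 1) = kummerCoeff 0 m := by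
      rw [kummerCoeff_succ_right, Nat.cast_zero, zero_add]
      field_simp
    simp only [shiftCoeff, Nat.cast_zero, Nat.cast_succ, zero_add, one_pow, one_mul,
      Nat.succ_ne_zero, if_false, sub_zero] at *
    refine mul_left_cancel₀ hm ?_
    linear_combination (m + 1) * hleft + hright + hleft' + hq

lemma logCoeff_add_two :
    ((n : ℂ) + 2) ^ 2 * logCoeff L (n + 2) m
      = (2 * n + 3) * logCoeff L (n + 1) m + shiftCoeff (logCoeff L (n + 1)) m
        - logCoeff L n m := by
  have hn : (n : ℂ) + 1 ≠ 0 := mod_cast n.succ_ne_zero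
  have hstep := logCoeff_succ_left L n m
  have hstep' := logCoeff_succ_left L (n + 1) m
  have hshift := sq_mul_logCoeff_sub L n m
  have hq : ((n : ℂ) + 1) ^ 2 * kummerCoeff (n + 1) m = (n + m + 1) * kummerCoeff n m := by
    rw [kummerCoeff_succ_left]; field_simp
  push_cast at hstep'
  refine mul_left_cancel₀ (pow_ne_zero 2 hn) ?_
  linear_combination (n + 1) ^ 2 * hstep' + hshift - hq + (m - n - 1) * hstep

end logCoeff

/-- Tricomi's confluent hypergeometric function `U(n + 1, 1, w)`, as its logarithmic series. -/
noncomputable def tricomiU (n : ℕ) (w : ℂ) : ℂ :=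
  ∑' m, logCoeff (log w) n m * w ^ m

lemma hasSum_tricomiU (n : ℕ) (w : ℂ) :
    HasSum (fun m ↦ logCoeff (log w) n m * w ^ m) (tricomiU n w) :=
  ((isEntireCoeff_logCoeff _ n).summable w).hasSum

lemma tricomiU_eq_sub_log_mul (n : ℕ) (w : ℂ) :
    tricomiU n w = ∑' m, logCoeff 0 n m * w ^ m - log w * ∑' m, kummerCoeff n m * w ^ m := by
  rw [← tsum_mul_left, ← ((isEntireCoeff_logCoeff 0 n).summable w).tsum_sub
    (((isEntireCoeff_kummerCoeff n).summable w).mul_left _)]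
  refine tsum_congr fun m ↦ ?_
  rw [logCoeff_eq_sub]
  ring

lemma tricomiU_one (w : ℂ) : tricomiU 1 w = (1 + w) * tricomiU 0 w - 1 := by
  have h0 := hasSum_tricomiU 0 w
  rw [one_add_mul]
  refine (hasSum_tricomiU 1 w).unique
    (((h0.add (hasSum_shiftCoeff h0)).sub (hasSum_ite_eq 0 (1 : ℂ))).congr_fun fun m ↦ ?_)
  rw [logCoeff_one, ← add_mul, sub_mul]
  rcases m with _ | m <;> simp

lemma tricomiU_add_two (n : ℕ) (w : ℂ) :
    ((n : ℂ) + 2) ^ 2 * tricomiU (n + 2) w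
      = (2 * n + 3 + w) * tricomiU (n + 1) w - tricomiU n w := by
  have h1 := hasSum_tricomiU (n + 1) w
  rw [add_mul]
  refine ((hasSum_tricomiU (n + 2) w).mul_left _).unique
    ((((h1.mul_left (2 * n + 3 : ℂ)).add (hasSum_shiftCoeff h1)).sub
      (hasSum_tricomiU n w)).congr_fun fun m ↦ ?_)
  linear_combination w ^ m * logCoeff_add_two (log w) n m

lemma hasDerivAt_tricomiU (n : ℕ) {w : ℂ} (hw : w ∈ slitPlane) :
    HasDerivAt (tricomiU n)
      ((((n : ℂ) + 1) ^ 2 * tricomiU (n + 1) w - (n + 1) * tricomiU n w) / w) w := by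
  have hw0 : w ≠ 0 := slitPlane_ne_zero hw
  have hP := isEntireCoeff_logCoeff 0 n
  have hQ := isEntireCoeff_kummerCoeff n
  have hsum : ∑' m : ℕ, m * logCoeff 0 n m * w ^ m - ∑' m, kummerCoeff n m * w ^ m
      - log w * ∑' m : ℕ, m * kummerCoeff n m * w ^ m
      = ((n : ℂ) + 1) ^ 2 * tricomiU (n + 1) w - (n + 1) * tricomiU n w := by
    refine (((hP.natCast_mul.summable w).hasSum.sub (hQ.summable w).hasSum).sub
      ((hQ.natCast_mul.summable w).hasSum.mul_left _)).unique
        ((((hasSum_tricomiU (n + 1) w).mul_left _).sub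
          ((hasSum_tricomiU n w).mul_left _)).congr_fun fun m ↦ ?_)
    linear_combination -(w ^ m) * logCoeff_succ_left (log w) n m
      - m * w ^ m * logCoeff_eq_sub (log w) n m
  rw [← hsum, funext (tricomiU_eq_sub_log_mul n)]
  refine ((hP.hasDerivAt_tsum_of_ne_zero hw0).sub
    ((hasDerivAt_log hw).mul (hQ.hasDerivAt_tsum_of_ne_zero hw0))).congr_deriv ?_
  field_simp
  ring

lemma norm_log_le (w : ℂ) : ‖log w‖ ≤ |Real.log ‖w‖| + Real.pi := by
  refine (norm_le_abs_re_add_abs_im _).trans ?_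
  rw [log_re, log_im]
  gcongr
  exact abs_arg_le_pi w

lemma tendsto_log_mul_exp_sub_one : Tendsto (fun w ↦ log w * (exp w - 1)) (𝓝 0) (𝓝 0) := by
  have hlim : Tendsto (fun w : ℂ ↦ 2 * (|‖w‖ * Real.log ‖w‖| + Real.pi * ‖w‖)) (𝓝 0) (𝓝 0) := by
    have hcont : Continuous fun w : ℂ ↦ 2 * (|‖w‖ * Real.log ‖w‖| + Real.pi * ‖w‖) := by
      have := Real.continuous_mul_log.comp (continuous_norm (E := ℂ))
      fun_prop
    simpa using hcont.tendsto 0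
  refine squeeze_zero_norm' ?_ hlim
  filter_upwards [Metric.closedBall_mem_nhds (0 : ℂ) one_pos] with w hw
  calc ‖log w * (exp w - 1)‖ = ‖log w‖ * ‖exp w - 1‖ := norm_mul _ _
    _ ≤ (|Real.log ‖w‖| + Real.pi) * (2 * ‖w‖) := by
        gcongr
        · exact norm_log_le w
        · exact norm_exp_sub_one_le (by simpa using hw)
    _ = 2 * (|‖w‖ * Real.log ‖w‖| + Real.pi * ‖w‖) := by rw [abs_mul, abs_norm]; ring

lemma tendsto_tricomiU_zero_add_log :
    Tendsto (fun w ↦ tricomiU 0 w + log w) (𝓝 0) (𝓝 (-Real.eulerMascheroniConstant : ℂ)) := by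
  have hP : Tendsto (fun w ↦ ∑' m, logCoeff 0 0 m * w ^ m) (𝓝 0)
      (𝓝 (-Real.eulerMascheroniConstant : ℂ)) := by
    have hzero : ∑' m, logCoeff 0 0 m * 0 ^ m = (-Real.eulerMascheroniConstant : ℂ) := by
      rw [tsum_eq_single 0 fun m hm ↦ by simp [hm], logCoeff_zero_zero, pow_zero, mul_one, sub_zero]
    exact hzero ▸ (isEntireCoeff_logCoeff 0 0).continuous_tsum.tendsto 0
  have hexp (w : ℂ) : ∑' m, kummerCoeff 0 m * w ^ m = exp w := by
    rw [exp_eq_exp_ℂ, ← (NormedSpace.expSeries_div_hasSum_exp w).tsum_eq]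
    exact tsum_congr fun m ↦ by rw [kummerCoeff_zero, inv_mul_eq_div]
  refine ((hP.sub tendsto_log_mul_exp_sub_one).congr fun w ↦ ?_).trans_eq (by rw [sub_zero])
  rw [tricomiU_eq_sub_log_mul, hexp]
  ring

lemma exists_norm_tricomiU_le (n : ℕ) :
    ∃ c : ℝ, ∀ w : ℂ, ‖w‖ ≤ 1 → ‖tricomiU n w‖ ≤ c * (1 + |Real.log ‖w‖|) := by
  obtain ⟨A, hA, hP⟩ := (isEntireCoeff_logCoeff 0 n).exists_norm_tsum_le
  obtain ⟨B, hB, hQ⟩ := (isEntireCoeff_kummerCoeff n).exists_norm_tsum_le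
  refine ⟨A + (1 + Real.pi) * B, fun w hw ↦ ?_⟩
  rw [tricomiU_eq_sub_log_mul]
  calc ‖∑' m, logCoeff 0 n m * w ^ m - log w * ∑' m, kummerCoeff n m * w ^ m‖
      ≤ A + (|Real.log ‖w‖| + Real.pi) * B := by
        refine (norm_sub_le _ _).trans ?_
        rw [norm_mul]
        gcongr
        exacts [hP w hw, norm_log_le w, hQ w hw]
    _ ≤ (A + (1 + Real.pi) * B) * (1 + |Real.log ‖w‖|) := by
        nlinarith [mul_nonneg hA (abs_nonneg (Real.log ‖w‖)),
          mul_nonneg (mul_nonneg Real.pi_pos.le hB) (abs_nonneg (Real.log ‖w‖))]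

lemma integrableOn_exp_neg_mul_pow (n : ℕ) :
    IntegrableOn (fun u : ℝ ↦ Real.exp (-u) * u ^ n) (Ioi 0) := by
  simpa using Real.GammaIntegral_convergent (s := n + 1) (by positivity)

lemma integral_exp_neg_mul_pow (n : ℕ) :
    ∫ u : ℝ in Ioi 0, Real.exp (-u) * u ^ n = n.factorial := by
  rw [← Real.Gamma_nat_eq_factorial, Real.Gamma_eq_integral (by positivity)]
  simp

lemma norm_exp_neg_mul_pow_div_pow_le (n p : ℕ) {w : ℂ} {u δ : ℝ} (hδ : 0 < δ) (hu : 0 ≤ u)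
    (h : δ ≤ ‖u + w‖) :
    ‖exp (-u) * u ^ n / (u + w) ^ p‖ ≤ Real.exp (-u) * u ^ n * δ⁻¹ ^ p := by
  have hnum : ‖exp (-(u : ℂ)) * u ^ n‖ = Real.exp (-u) * u ^ n := by
    simp [norm_exp, abs_of_nonneg hu]
  rw [norm_div, hnum, norm_pow, div_eq_mul_inv, ← inv_pow]
  gcongr

/-- The integrand of the Laplace representation
`n! U(n + 1, 1, w) = ∫₀^∞ e⁻ᵘ uⁿ / (u + w)ⁿ⁺¹ du`. -/
noncomputable def tricomiKernel (n : ℕ) (w : ℂ) (u : ℝ) : ℂ :=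
  exp (-u) * u ^ n / (u + w) ^ (n + 1)

lemma measurable_tricomiKernel (n : ℕ) (w : ℂ) : Measurable (tricomiKernel n w) := by
  unfold tricomiKernel
  fun_prop

lemma exists_le_norm_ofReal_add {w : ℂ} (hw : w ∈ slitPlane) :
    ∃ δ > 0, ∀ v ∈ Metric.ball w δ, ∀ u : ℝ, 0 ≤ u → δ ≤ ‖u + v‖ := by
  obtain ⟨ε, hε, hball⟩ := Metric.isOpen_iff.1 isOpen_slitPlane w hw
  refine ⟨ε / 2, half_pos hε, fun v hv u hu ↦ ?_⟩
  by_contra! hlt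
  have hmem : -(u : ℂ) ∈ Metric.ball w ε := by
    rw [Metric.mem_ball, dist_eq_norm] at hv ⊢
    calc ‖-(u : ℂ) - w‖ = ‖(v - w) - (u + v)‖ := by ring_nf
      _ ≤ ‖v - w‖ + ‖u + v‖ := norm_sub_le _ _
      _ < ε := by linarith
  exact not_lt.2 hu (by simpa using hball hmem)

lemma ofReal_add_ne_zero {w : ℂ} (hw : w ∈ slitPlane) {u : ℝ} (hu : 0 ≤ u) : (u : ℂ) + w ≠ 0 := by
  obtain ⟨δ, hδ, h⟩ := exists_le_norm_ofReal_add hw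
  exact norm_pos_iff.1 (hδ.trans_le (h w (Metric.mem_ball_self hδ) u hu))

lemma integrableOn_tricomiKernel (n : ℕ) {w : ℂ} (hw : w ∈ slitPlane) :
    IntegrableOn (tricomiKernel n w) (Ioi 0) := by
  obtain ⟨δ, hδ, h⟩ := exists_le_norm_ofReal_add hw
  refine ((integrableOn_exp_neg_mul_pow n).mul_const (δ⁻¹ ^ (n + 1))).mono'
    (measurable_tricomiKernel n w).aestronglyMeasurable ?_
  filter_upwards [ae_restrict_mem measurableSet_Ioi] with u hu
  exact norm_exp_neg_mul_pow_div_pow_le n (n + 1) hδ (le_of_lt hu)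
    (h w (Metric.mem_ball_self hδ) u (le_of_lt hu))

lemma hasDerivAt_mul_tricomiKernel (n : ℕ) {w : ℂ} {u : ℝ} (h : (u : ℂ) + w ≠ 0) :
    HasDerivAt (fun u ↦ w * tricomiKernel n w u)
      (n * tricomiKernel (n - 1) w u - (2 * n + 1 + w) * tricomiKernel n w u
        + (n + 1) * tricomiKernel (n + 1) w u) u := by
  have hu : HasDerivAt (fun v : ℂ ↦ v) 1 (u : ℂ) := hasDerivAt_id _
  have hquot := ((hu.fun_neg.cexp.fun_mul (hu.fun_pow n)).fun_div
    ((hu.add_const w).fun_pow (n + 1)) (pow_ne_zero _ h)).const_mul w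
  refine hquot.comp_ofReal.congr_deriv ?_
  rcases n with _ | n
  · simp only [tricomiKernel]
    push_cast
    field_simp
    ring
  · simp only [tricomiKernel, Nat.add_sub_cancel]
    push_cast
    field_simp
    ring

/-- The Laplace integral `∫₀^∞ e⁻ᵘ uⁿ / (u + w)ⁿ⁺¹ du`. -/
noncomputable def tricomiIntegral (n : ℕ) (w : ℂ) : ℂ :=
  ∫ u in Ioi (0 : ℝ), tricomiKernel n w u

lemma norm_tricomiIntegral_le (n : ℕ) {w : ℂ} (hw : w ≠ 0) (hre : 0 ≤ w.re) :
    ‖tricomiIntegral n w‖ ≤ n.factorial * ‖w‖⁻¹ ^ (n + 1) := by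
  rw [← integral_exp_neg_mul_pow, ← integral_mul_const]
  refine norm_integral_le_of_norm_le ((integrableOn_exp_neg_mul_pow n).mul_const _) ?_
  filter_upwards [ae_restrict_mem measurableSet_Ioi] with u hu
  refine norm_exp_neg_mul_pow_div_pow_le n (n + 1) (norm_pos_iff.2 hw) (le_of_lt hu) ?_
  have hu0 : 0 < u := hu
  rw [← sq_le_sq₀ (norm_nonneg _) (norm_nonneg _), Complex.sq_norm, Complex.sq_norm, normSq_apply,
    normSq_apply]
  simp only [add_re, ofReal_re, add_im, ofReal_im, zero_add]
  nlinarith [mul_nonneg hu0.le hre]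

lemma tricomiIntegral_recurrence (n : ℕ) {w : ℂ} (hw : w ∈ slitPlane) :
    n * tricomiIntegral (n - 1) w - (2 * n + 1 + w) * tricomiIntegral n w
      + (n + 1) * tricomiIntegral (n + 1) w = -if n = 0 then 1 else 0 := by
  have hint (c : ℂ) (j : ℕ) : IntegrableOn (fun u ↦ c * tricomiKernel j w u) (Ioi 0) :=
    (integrableOn_tricomiKernel j hw).const_mul c
  have hderiv (u : ℝ) (hu : 0 ≤ u) := hasDerivAt_mul_tricomiKernel n (ofReal_add_ne_zero hw hu)
  have hsub := (hint n (n - 1)).sub' (hint (2 * n + 1 + w) n)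
  have hadd := hsub.fun_add (hint (n + 1) (n + 1))
  have hftc := integral_Ioi_of_hasDerivAt_of_tendsto' hderiv hadd
    (tendsto_zero_of_hasDerivAt_of_integrableOn_Ioi (fun u hu ↦ hderiv u (le_of_lt hu)) hadd
      (hint w n))
  have hzero : w * tricomiKernel n w 0 = if n = 0 then 1 else 0 := by
    rcases n with _ | n
    · simp [tricomiKernel, slitPlane_ne_zero hw]
    · simp [tricomiKernel]
  rwa [integral_add hsub (hint _ _), integral_sub (hint _ _) (hint _ _), integral_const_mul,
    integral_const_mul, integral_const_mul, hzero, zero_sub] at hftc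

lemma hasDerivAt_tricomiKernel (n : ℕ) {w : ℂ} {u : ℝ} (h : (u : ℂ) + w ≠ 0) :
    HasDerivAt (fun w ↦ tricomiKernel n w u)
      (-(n + 1) * (exp (-u) * u ^ n / (u + w) ^ (n + 2))) w := by
  have hw : HasDerivAt (fun v : ℂ ↦ v) 1 w := hasDerivAt_id w
  refine ((hasDerivAt_const w (exp (-u) * u ^ n)).fun_div ((hw.const_add (u : ℂ)).fun_pow (n + 1))
    (pow_ne_zero _ h)).congr_deriv ?_
  push_cast
  field_simp
  ring

lemma hasDerivAt_tricomiIntegral (n : ℕ) {w : ℂ} (hw : w ∈ slitPlane) :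
    HasDerivAt (tricomiIntegral n)
      ((n + 1) * (tricomiIntegral (n + 1) w - tricomiIntegral n w) / w) w := by
  obtain ⟨δ, hδ, h⟩ := exists_le_norm_ofReal_add hw
  have hne {v : ℂ} (hv : v ∈ Metric.ball w δ) {u : ℝ} (hu : 0 < u) : (u : ℂ) + v ≠ 0 :=
    norm_pos_iff.1 (hδ.trans_le (h v hv u hu.le))
  have hw0 := slitPlane_ne_zero hw
  have hderiv := (hasDerivAt_integral_of_dominated_loc_of_deriv_le
    (F' := fun v u ↦ -(n + 1) * (exp (-u) * u ^ n / (u + v) ^ (n + 2)))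
    (bound := fun u ↦ (n + 1) * (Real.exp (-u) * u ^ n * δ⁻¹ ^ (n + 2)))
    (Metric.ball_mem_nhds w hδ)
    (.of_forall fun v ↦ (measurable_tricomiKernel n v).aestronglyMeasurable)
    (integrableOn_tricomiKernel n hw) (Measurable.aestronglyMeasurable (by fun_prop)) ?_
    (((integrableOn_exp_neg_mul_pow n).mul_const _).const_mul _) ?_).2
  · refine hderiv.congr_deriv ?_
    rw [tricomiIntegral, tricomiIntegral, ← integral_sub (integrableOn_tricomiKernel _ hw)
      (integrableOn_tricomiKernel _ hw), ← integral_const_mul, ← integral_div]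
    refine setIntegral_congr_fun measurableSet_Ioi fun u hu ↦ ?_
    have := hne (Metric.mem_ball_self hδ) hu
    simp only [tricomiKernel]
    field_simp
    ring
  · filter_upwards [ae_restrict_mem measurableSet_Ioi] with u hu v hv
    have hn : ‖-((n : ℂ) + 1)‖ = n + 1 := by rw [norm_neg]; exact_mod_cast norm_natCast (n + 1)
    rw [norm_mul, hn]
    gcongr
    exact norm_exp_neg_mul_pow_div_pow_le n (n + 2) hδ (le_of_lt hu) (h v hv u (le_of_lt hu))
  · filter_upwards [ae_restrict_mem measurableSet_Ioi] with u hu v hv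
    exact hasDerivAt_tricomiKernel n (hne hv hu)

lemma abs_log_add_le {u x : ℝ} (hu : 0 < u) (hx : 0 ≤ x) :
    |Real.log (u + x)| ≤ 2 * u ^ (-1 / 2 : ℝ) + u + x := by
  have hrpow : 0 ≤ u ^ (-1 / 2 : ℝ) := Real.rpow_nonneg hu.le _
  have hlower : -Real.log (u + x) ≤ 2 * u ^ (-1 / 2 : ℝ) := by
    calc -Real.log (u + x) ≤ -Real.log u := by gcongr; linarith
      _ = Real.log u⁻¹ := (Real.log_inv u).symm
      _ ≤ u⁻¹ ^ (1 / 2 : ℝ) / (1 / 2) :=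
          Real.log_le_rpow_div (inv_nonneg.2 hu.le) (by norm_num)
      _ = 2 * u ^ (-1 / 2 : ℝ) := by
          rw [Real.inv_rpow hu.le, ← Real.rpow_neg hu.le]; ring_nf
  have hupper := Real.log_le_self (add_nonneg hu.le hx)
  exact abs_le.2 ⟨by linarith, by linarith⟩

lemma integrableOn_exp_neg_mul_rpow_add (c : ℝ) :
    IntegrableOn (fun u : ℝ ↦ Real.exp (-u) * (2 * u ^ (-1 / 2 : ℝ) + u + c)) (Ioi 0) := by
  have hrpow : IntegrableOn (fun u : ℝ ↦ Real.exp (-u) * u ^ (-1 / 2 : ℝ)) (Ioi 0) := by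
    convert Real.GammaIntegral_convergent (s := 1 / 2) (by norm_num) using 4
    norm_num
  have hsum := ((hrpow.const_mul 2).fun_add (integrableOn_exp_neg_mul_pow 1)).fun_add
    ((integrableOn_exp_neg_mul_pow 0).const_mul c)
  refine IntegrableOn.congr_fun hsum (fun u _ ↦ ?_) measurableSet_Ioi
  ring

lemma norm_exp_neg_mul_log_add_le {u x c : ℝ} (hu : 0 < u) (hx : 0 ≤ x) (hxc : x ≤ c) :
    ‖Real.exp (-u) * Real.log (u + x)‖ ≤ Real.exp (-u) * (2 * u ^ (-1 / 2 : ℝ) + u + c) := by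
  rw [norm_mul, Real.norm_eq_abs, Real.norm_eq_abs, Real.abs_exp]
  gcongr
  exact (abs_log_add_le hu hx).trans (by gcongr)

lemma integrableOn_exp_neg_mul_log_add {x : ℝ} (hx : 0 ≤ x) :
    IntegrableOn (fun u ↦ Real.exp (-u) * Real.log (u + x)) (Ioi 0) := by
  refine (integrableOn_exp_neg_mul_rpow_add x).mono'
    (Measurable.aestronglyMeasurable (by fun_prop)) ?_
  filter_upwards [ae_restrict_mem measurableSet_Ioi] with u hu
  exact norm_exp_neg_mul_log_add_le hu hx le_rfl

lemma integral_exp_neg_mul_log :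
    ∫ u in Ioi 0, Real.exp (-u) * Real.log u = -Real.eulerMascheroniConstant := by
  have hΓ : HasDerivAt Gamma (∫ t : ℝ in Ioi 0, (t : ℂ) ^ ((1 : ℂ) - 1) *
      (Real.log t * Real.exp (-t))) 1 := by
    refine (hasDerivAt_GammaIntegral (s := 1) (by simp)).congr_of_eventuallyEq ?_
    have hopen : IsOpen {s : ℂ | 0 < s.re} := isOpen_lt continuous_const continuous_re
    filter_upwards [hopen.mem_nhds (by simp : 0 < (1 : ℂ).re)] with s hs
    exact Gamma_eq_integral hs
  have hderiv := hΓ.unique hasDerivAt_Gamma_one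
  simp only [sub_self, cpow_zero, one_mul, ← ofReal_mul, ← ofReal_neg] at hderiv
  rw [integral_complex_ofReal] at hderiv
  simpa only [mul_comm] using ofReal_injective hderiv

lemma tricomiIntegral_zero_ofReal (x : ℝ) :
    tricomiIntegral 0 x = ((∫ u in Ioi 0, Real.exp (-u) / (u + x) : ℝ) : ℂ) := by
  rw [← integral_complex_ofReal]
  simp [tricomiIntegral, tricomiKernel]

lemma tricomiIntegral_zero_add_log {x : ℝ} (hx : 0 < x) :
    tricomiIntegral 0 x + log x = ((∫ u in Ioi 0, Real.exp (-u) * Real.log (u + x) : ℝ) : ℂ) := by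
  have hlog := integrableOn_exp_neg_mul_log_add hx.le
  have hdiv : IntegrableOn (fun u ↦ Real.exp (-u) / (u + x)) (Ioi 0) := by
    refine IntegrableOn.congr_fun (integrableOn_tricomiKernel 0 (ofReal_mem_slitPlane.2 hx)).re
      (fun u _ ↦ ?_) measurableSet_Ioi
    simp only [tricomiKernel, pow_zero, mul_one, zero_add, pow_one, ← ofReal_neg, ← ofReal_exp,
      ← ofReal_add, ← ofReal_div]
    exact ofReal_re _
  have hderiv (u : ℝ) (hu : 0 ≤ u) : HasDerivAt (fun u ↦ Real.exp (-u) * Real.log (u + x))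
      (Real.exp (-u) / (u + x) - Real.exp (-u) * Real.log (u + x)) u := by
    have hpos : u + x ≠ 0 := by positivity
    refine ((hasDerivAt_neg u).exp.fun_mul
      (((hasDerivAt_id' u).add_const x).log hpos)).congr_deriv ?_
    ring
  have hparts := integral_Ioi_of_hasDerivAt_of_tendsto' hderiv (hdiv.sub' hlog)
    (tendsto_zero_of_hasDerivAt_of_integrableOn_Ioi (fun u hu ↦ hderiv u (le_of_lt hu))
      (hdiv.sub' hlog) hlog)
  rw [integral_sub hdiv hlog, neg_zero, Real.exp_zero, zero_add, one_mul, zero_sub] at hparts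
  rw [tricomiIntegral_zero_ofReal, ← ofReal_log hx.le, ← ofReal_add, ofReal_inj]
  linarith

lemma tendsto_tricomiIntegral_zero_add_log :
    Tendsto (fun x : ℝ ↦ tricomiIntegral 0 x + log x) (𝓝[>] 0)
      (𝓝 (-Real.eulerMascheroniConstant : ℂ)) := by
  have hreal : Tendsto (fun x ↦ ∫ u in Ioi 0, Real.exp (-u) * Real.log (u + x)) (𝓝[>] 0)
      (𝓝 (-Real.eulerMascheroniConstant)) := by
    rw [← integral_exp_neg_mul_log]
    refine tendsto_integral_filter_of_dominated_convergence _
      (.of_forall fun x ↦ Measurable.aestronglyMeasurable (by fun_prop)) ?_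
      (integrableOn_exp_neg_mul_rpow_add 1) ?_
    · filter_upwards [Ioc_mem_nhdsGT one_pos] with x hx
      filter_upwards [ae_restrict_mem measurableSet_Ioi] with u hu
      exact norm_exp_neg_mul_log_add_le hu hx.1.le hx.2
    · filter_upwards [ae_restrict_mem measurableSet_Ioi] with u hu
      have hcont : ContinuousAt (fun x ↦ Real.exp (-u) * Real.log (u + x)) 0 := by
        have : u + 0 ≠ 0 := by rw [add_zero]; exact ne_of_gt hu
        fun_prop (disch := assumption)
      simpa using hcont.tendsto.mono_left nhdsWithin_le_nhds
  rw [← ofReal_neg]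
  refine ((continuous_ofReal.tendsto _).comp hreal).congr' ?_
  filter_upwards [self_mem_nhdsWithin] with x hx
  exact (tricomiIntegral_zero_add_log hx).symm

lemma tricomiU_zero_eq_tricomiIntegral {w : ℂ} (hw : w ∈ slitPlane) :
    tricomiU 0 w = tricomiIntegral 0 w := by
  have hderiv (v : ℂ) (hv : v ∈ slitPlane) :
      HasDerivAt (fun v ↦ exp (-v) * (tricomiU 0 v - tricomiIntegral 0 v)) 0 v := by
    have hrec := tricomiIntegral_recurrence 0 hv
    have hv0 := slitPlane_ne_zero hv
    refine ((hasDerivAt_neg v).cexp.fun_mul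
      ((hasDerivAt_tricomiU 0 hv).fun_sub (hasDerivAt_tricomiIntegral 0 hv))).congr_deriv ?_
    rw [zero_add, tricomiU_one]
    simp only [Nat.cast_zero, if_true] at hrec ⊢
    field_simp
    linear_combination exp (-v) * -hrec
  obtain ⟨c, hc⟩ := isOpen_slitPlane.exists_is_const_of_deriv_eq_zero
    (starConvex_one_slitPlane.isPathConnected one_mem_slitPlane).isConnected.isPreconnected
    (fun v hv ↦ (hderiv v hv).differentiableAt.differentiableWithinAt)
    (fun v hv ↦ (hderiv v hv).deriv)
  have hofReal : Tendsto (fun x : ℝ ↦ (x : ℂ)) (𝓝[>] 0) (𝓝 0) :=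
    (continuous_ofReal.tendsto' 0 0 ofReal_zero).mono_left nhdsWithin_le_nhds
  have hdiff := (tendsto_tricomiU_zero_add_log.comp hofReal).sub
    tendsto_tricomiIntegral_zero_add_log
  have hlim : Tendsto (fun _ : ℝ ↦ c) (𝓝[>] 0) (𝓝 0) := by
    have hexp : Tendsto (fun x : ℝ ↦ exp (-x)) (𝓝[>] 0) (𝓝 1) :=
      ((continuous_exp.comp continuous_neg).tendsto' 0 1 (by simp)).comp hofReal
    refine ((hexp.mul hdiff).congr' ?_).trans_eq (by simp)
    filter_upwards [self_mem_nhdsWithin] with x hx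
    rw [← hc x (ofReal_mem_slitPlane.2 hx), Function.comp_apply]
    ring
  have hzero := hc w hw
  rw [tendsto_nhds_unique tendsto_const_nhds hlim] at hzero
  exact sub_eq_zero.1 ((mul_eq_zero.1 hzero).resolve_left (exp_ne_zero _))

lemma factorial_mul_tricomiU (n : ℕ) {w : ℂ} (hw : w ∈ slitPlane) :
    n.factorial * tricomiU n w = tricomiIntegral n w := by
  induction n using Nat.twoStepInduction with
  | zero => simpa using tricomiU_zero_eq_tricomiIntegral hw
  | one =>
    have hrec := tricomiIntegral_recurrence 0 hw
    rw [tricomiU_one, tricomiU_zero_eq_tricomiIntegral hw]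
    simp only [Nat.cast_zero, if_true] at hrec
    simp only [Nat.factorial_one, Nat.cast_one]
    linear_combination -hrec
  | more n ih₀ ih₁ =>
    have hn : (n : ℂ) + 2 ≠ 0 := mod_cast (n + 1).succ_ne_zero
    have hrec := tricomiIntegral_recurrence (n + 1) hw
    have hU := tricomiU_add_two n w
    rw [Nat.add_sub_cancel, if_neg n.succ_ne_zero, ← ih₀, ← ih₁] at hrec
    rw [Nat.factorial_succ] at hrec
    rw [Nat.factorial_succ, Nat.factorial_succ]
    push_cast at hrec ⊢
    refine mul_left_cancel₀ hn ?_
    linear_combination (n + 1) * n.factorial * hU - hrec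

lemma norm_tricomiU_le (n : ℕ) {w : ℂ} (hw : w ≠ 0) (hre : 0 ≤ w.re) :
    ‖tricomiU n w‖ ≤ ‖w‖⁻¹ ^ (n + 1) := by
  have hslit : w ∈ slitPlane := mem_slitPlane_iff.2
    (hre.lt_or_eq.imp_right fun h him ↦ hw (Complex.ext h.symm him))
  have hfac : (0 : ℝ) < n.factorial := mod_cast n.factorial_pos
  refine le_of_mul_le_mul_left ?_ hfac
  rw [← Complex.norm_natCast, ← norm_mul, factorial_mul_tricomiU n hslit, Complex.norm_natCast]
  exact norm_tricomiIntegral_le n hw hre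

lemma I_mul_ofReal_mem_slitPlane {z : ℝ} (hz : z ≠ 0) : I * z ∈ slitPlane :=
  mem_slitPlane_iff.2 (.inr (by simpa using hz))

lemma Efun_succ (n : ℕ) (z : ℝ) : Efun (n + 1) z = exp (-I * z) * tricomiU n (I * z) := by
  rw [Efun, tricomiU, div_mul_eq_mul_div, mul_div_assoc, ← tsum_div_const]
  congr 2
  funext m
  have hΓ : Gamma ((n : ℂ) + 1 + m) = (n + m).factorial := by
    rw [← Gamma_nat_eq_factorial]
    push_cast
    ring_nf
  rw [Gamma_nat_eq_factorial, hΓ, logCoeff, kummerCoeff]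
  ring

lemma Efun_add_two (k : ℕ) (z : ℝ) :
    ((k : ℂ) + 1) ^ 2 * Efun (k + 2) z = (2 * k + 1 + I * z) * Efun (k + 1) z - Efun k z := by
  rcases k with _ | n
  · rw [Efun_succ, Efun_succ, tricomiU_one, Efun]
    push_cast
    ring
  · rw [Efun_succ, Efun_succ, Efun_succ]
    push_cast
    linear_combination exp (-I * z) * tricomiU_add_two n (I * z)

lemma hasDerivAt_exp_neg_I_mul (z : ℝ) :
    HasDerivAt (fun t : ℝ ↦ exp (-I * t)) (-I * exp (-I * z)) z := by
  simpa [mul_comm] using (ofRealCLM.hasDerivAt.const_mul (-I) : HasDerivAt _ _ z).cexp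

lemma hasDerivAt_Efun_succ (k : ℕ) {z : ℝ} (hz : z ≠ 0) :
    HasDerivAt (Efun (k + 1)) ((k * Efun (k + 1) z - Efun k z) / z) z := by
  have hzc : (z : ℂ) ≠ 0 := mod_cast hz
  have hU := (hasDerivAt_tricomiU k (I_mul_ofReal_mem_slitPlane hz)).comp z
    (ofRealCLM.hasDerivAt.const_mul I)
  rw [funext (Efun_succ k)]
  refine ((hasDerivAt_exp_neg_I_mul z).mul hU).congr_deriv ?_
  have hE := Efun_add_two k z
  rw [Efun_succ, Efun_succ] at hE
  rw [Function.comp_apply, ofRealCLM_apply, ofRealCLM_apply, ofReal_one]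
  field_simp [I_ne_zero]
  rw [← neg_mul]
  linear_combination hE

lemma deriv_mul_deriv_Efun_succ (k : ℕ) {z : ℝ} (hz : z ≠ 0) :
    deriv (fun t : ℝ ↦ (t : ℂ) * deriv (Efun (k + 1)) t) z = I * Efun k z := by
  have heq : (fun t : ℝ ↦ (t : ℂ) * deriv (Efun (k + 1)) t)
      =ᶠ[𝓝 z] fun t ↦ k * Efun (k + 1) t - Efun k t := by
    filter_upwards [isOpen_ne.mem_nhds hz] with t ht
    rw [(hasDerivAt_Efun_succ k ht).deriv, mul_div_cancel₀ _ (ofReal_ne_zero.2 ht)]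
  rw [heq.deriv_eq]
  refine HasDerivAt.deriv ?_
  rcases k with _ | n
  · simpa [Efun] using (hasDerivAt_exp_neg_I_mul z).fun_neg
  · refine (((hasDerivAt_Efun_succ (n + 1) hz).const_mul _).sub
      (hasDerivAt_Efun_succ n hz)).congr_deriv ?_
    have hzc : (z : ℂ) ≠ 0 := mod_cast hz
    have hE := Efun_add_two n z
    push_cast
    field_simp
    linear_combination hE

lemma norm_Efun_succ (n : ℕ) (z : ℝ) : ‖Efun (n + 1) z‖ = ‖tricomiU n (I * z)‖ := by
  rw [Efun_succ, norm_mul, norm_exp]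
  simp

lemma norm_Efun_le_one (k : ℕ) {z : ℝ} (hz : 1 ≤ |z|) : ‖Efun k z‖ ≤ 1 := by
  rcases k with _ | n
  · simp [Efun, norm_exp]
  · have hz0 : z ≠ 0 := abs_pos.1 (one_pos.trans_le hz)
    have hnorm : ‖I * z‖ = |z| := by simp
    rw [norm_Efun_succ]
    refine (norm_tricomiU_le n (mul_ne_zero I_ne_zero (ofReal_ne_zero.2 hz0)) (by simp)).trans ?_
    rw [hnorm]
    exact pow_le_one₀ (inv_nonneg.2 (abs_nonneg z)) (inv_le_one_of_one_le₀ hz)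

lemma exists_norm_Efun_le (k : ℕ) :
    ∃ c : ℝ, ∀ z : ℝ, |z| ≤ 1 → ‖Efun k z‖ ≤ c * (1 + lnp (1 / |z|)) := by
  rcases k with _ | n
  · exact ⟨1, fun z _ ↦ by simp [Efun, norm_exp, lnp]⟩
  · obtain ⟨c, hc⟩ := exists_norm_tricomiU_le n
    refine ⟨c, fun z hz ↦ ?_⟩
    have hnorm : ‖I * z‖ = |z| := by simp
    have hlog : lnp (1 / |z|) = |Real.log (|z|)| := by
      have hnonpos := Real.log_nonpos (abs_nonneg z) hz
      rw [lnp, one_div, Real.log_inv, abs_of_nonpos hnonpos, max_eq_left (neg_nonneg.2 hnonpos)]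
    rw [norm_Efun_succ, hlog, ← hnorm]
    exact hc (I * z) (hnorm.trans_le hz)

/-- Lemma (Exponential integral estimates): the recursion `∂_z(z ∂_z E_{k+1}(z)) = i E_k(z)`
holds, and there is a constant `c` depending only on `k` such that
`|E_k(z)| ≤ c (1 + ln₊(1/|z|))` for all real `z ≠ 0`. -/
theorem Efun_recursion_and_bound (k : ℕ) :
    (∀ z : ℝ, z ≠ 0 →
      deriv (fun t : ℝ => (t : ℂ) * deriv (fun u : ℝ => Efun (k + 1) u) t) z
        = Complex.I * Efun k z) ∧
    (∃ c : ℝ, ∀ z : ℝ, z ≠ 0 → ‖Efun k z‖ ≤ c * (1 + lnp (1 / |z|))) := by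
  refine ⟨fun z hz ↦ deriv_mul_deriv_Efun_succ k hz, ?_⟩
  obtain ⟨c, hc⟩ := exists_norm_Efun_le k
  refine ⟨max c 1, fun z _ ↦ ?_⟩
  have hlnp : 0 ≤ lnp (1 / |z|) := le_max_right _ _
  rcases le_total |z| 1 with hz | hz
  · exact (hc z hz).trans (by gcongr; exact le_max_left c 1)
  · calc ‖Efun k z‖ ≤ 1 := norm_Efun_le_one k hz
      _ ≤ max c 1 * (1 + lnp (1 / |z|)) :=
          one_le_mul_of_one_le_of_one_le (le_max_right c 1) (by linarith)
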